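/- Let S = (L, ≺) be an addable abstract numeration system, let x be an S-automatic infinite word over a finite alphabet C, and let X = O(x) be the subshift generated by x. Then the winning shift W(X) ⊆ ℕ^ℕ is weakly S-codable. -/

import Mathlib

open scoped BigOperators

/-- A language is regular if it is accepted by a DFA with finitely many states. -/
def IsRegularLang {α : Type*} (L : Set (List α)) : Prop :=
  ∃ (σ : Type) (_ : Fintype σ) (M : DFA α σ), ∀ w : List α, w ∈ M.accepts ↔ w ∈ L

/-- Pad a word over `A` to length `M` by prepending the padding symbol `none`. -/
def padOne {A : Type*} (M : ℕ) (w : List A) : List (Option A) :=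
  List.replicate (M - w.length) none ++ w.map some

/-- The padded form of a `d`-tuple of words over `A`, as a word over `(A ∪ {#})^d`. -/
def padTuple {A : Type*} {d : ℕ} (ws : Fin d → List A) : List (Fin d → Option A) :=
  List.ofFn fun j : Fin (Finset.univ.sup fun i : Fin d => (ws i).length) =>
    fun i : Fin d =>
      (padOne (Finset.univ.sup fun i : Fin d => (ws i).length) (ws i)).getD j.val none

/-- An abstract numeration system over the alphabet `A`, encoded by the order isomorphism
`rep : ℕ → L ⊆ A*` enumerating its (infinite) language in increasing order. -/
structure ANS (A : Type*) where
  rep : ℕ → List A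
  inj : Function.Injective rep

/-- A set `Y ⊆ ℕ^d` is `S`-recognizable if the padded representations of its members form
a regular language. -/
def ANS.Recognizable {A : Type*} (S : ANS A) {d : ℕ} (Y : Set (Fin d → ℕ)) : Prop :=
  IsRegularLang { w : List (Fin d → Option A) | ∃ t ∈ Y, w = padTuple fun i => S.rep (t i) }

/-- An ANS is addable if the graph of addition is `S`-recognizable. -/
def ANS.Addable {A : Type*} (S : ANS A) : Prop :=
  S.Recognizable { t : Fin 3 → ℕ | t 0 + t 1 = t 2 }

/-- An ANS is comparable if the relation `≤` is `S`-recognizable. -/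
def ANS.Comparable {A : Type*} (S : ANS A) : Prop :=
  S.Recognizable { t : Fin 2 → ℕ | t 0 ≤ t 1 }

/-- An ANS is regular if `ℕ` (i.e. its language) is `S`-recognizable. -/
def ANS.IsRegularANS {A : Type*} (S : ANS A) : Prop :=
  S.Recognizable (Set.univ : Set (Fin 1 → ℕ))

/-- The unary ANS, with language `0*` ordered by length. -/
def unaryANS : ANS Unit where
  rep := fun n => List.replicate n ()
  inj := fun m n h => by simpa using congrArg List.length h

/-- `x` is `S`-automatic: some DFAO outputs `x n` on input `rep_S n`. -/
def SAutomatic {A C : Type*} (S : ANS A) (x : ℕ → C) : Prop :=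
  ∃ (Q : Type) (_ : Fintype Q) (M : DFA A Q) (τ : Q → C),
    ∀ n : ℕ, τ (M.eval (S.rep n)) = x n

/-- The shift map on one-sided infinite words. -/
def shiftMap {C : Type*} (x : ℕ → C) : ℕ → C := fun n => x (n + 1)

/-- The orbit closure of `x` (closure in the product topology over the discrete alphabet):
`y` belongs to it iff every finite prefix of `y` occurs in `x`. -/
def orbitClosure {C : Type*} (x : ℕ → C) : Set (ℕ → C) :=
  { y | ∀ n : ℕ, ∃ m : ℕ, ∀ i < n, y i = x (m + i) }

/-- A subshift: a shift-invariant subset of `C^ℕ` that is closed in the product topology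
over the discrete alphabet (expressed combinatorially). -/
def IsSubshift {C : Type*} (X : Set (ℕ → C)) : Prop :=
  (∀ x ∈ X, shiftMap x ∈ X) ∧
  ∀ y : ℕ → C, (∀ n : ℕ, ∃ x ∈ X, ∀ i < n, y i = x i) → y ∈ X

/-- The language of a set of infinite words: all finite factors of its elements. -/
def LangOf {C : Type*} (X : Set (ℕ → C)) : Set (List C) :=
  { w | ∃ x ∈ X, ∃ p : ℕ, w = List.ofFn fun i : Fin w.length => x (p + i) }

/-- A word is right special in (the language of) `X` if it has two distinct one-letter
extensions in the language of `X`. -/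
def RightSpecial {C : Type*} (X : Set (ℕ → C)) (w : List C) : Prop :=
  ∃ a b : C, a ≠ b ∧ w ++ [a] ∈ LangOf X ∧ w ++ [b] ∈ LangOf X

/-- The factor complexity of `x`: the number of distinct factors of length `n`. -/
noncomputable def factorComplexity {C : Type*} (x : ℕ → C) (n : ℕ) : ℕ :=
  Set.ncard { w : List C | ∃ p : ℕ, w = List.ofFn fun i : Fin n => x (p + i) }

/-- `T` is a strategy tree witnessing `α ∈ W(X)`: a prefix-closed set of finite words
containing the empty word, in which every word of length `i` has exactly `α i + 1`
one-letter extensions, and all whose infinite branches lie in `X`. -/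
def IsStrategyTree {C : Type*} (X : Set (ℕ → C)) (α : ℕ → ℕ) (T : Set (List C)) : Prop :=
  ([] : List C) ∈ T ∧
  (∀ u v : List C, u ++ v ∈ T → u ∈ T) ∧
  (∀ w ∈ T, Set.ncard { c : C | w ++ [c] ∈ T } = α w.length + 1) ∧
  (∀ y : ℕ → C, (∀ n : ℕ, (List.ofFn fun i : Fin n => y i) ∈ T) → y ∈ X)

/-- The winning shift of `X ⊆ C^ℕ`, a subset of `ℕ^ℕ`. -/
def winningShift {C : Type*} (X : Set (ℕ → C)) : Set (ℕ → ℕ) :=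
  { α | ∃ T : Set (List C), IsStrategyTree X α T }

/-- Membership in the winning set of a set `X` of finite words, defined recursively:
`ε ∈ W(X)` iff `ε ∈ X`, and `a :: α ∈ W(X)` iff there is a set of `a + 1` letters `c`
such that `α` is in the winning set of the left quotient of `X` by `c`. -/
def winningSetMem {C : Type*} : List ℕ → Set (List C) → Prop
  | [], X => [] ∈ X
  | a :: α, X => ∃ S : Finset C, S.card = a + 1 ∧ ∀ c ∈ S, winningSetMem α { w | c :: w ∈ X }

/-- `Σ y = m`: the sum of the letters of `y ∈ ℕ^ℕ` is finite and equals `m`. -/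
def sumEq (y : ℕ → ℕ) (m : ℕ) : Prop :=
  (Function.support y).Finite ∧ ∑ᶠ i, y i = m

/-- `Y ⊆ ℕ^ℕ` has finite coding dimension: the sums `Σ y`, `y ∈ Y`, are uniformly bounded. -/
def FiniteCodingDim (Y : Set (ℕ → ℕ)) : Prop :=
  ∃ d : ℕ, ∀ y ∈ Y, ∀ F : Finset ℕ, ∑ i ∈ F, y i ≤ d

/-- The set `{ν(y) : y ∈ Y, Σy = k} ⊆ ℕᵏ`: nondecreasing `k`-tuples `t` such that the word
whose letter at `j` is the number of occurrences of `j` in `t` belongs to `Y`. -/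
def nuSet (Y : Set (ℕ → ℕ)) (k : ℕ) : Set (Fin k → ℕ) :=
  { t | Monotone t ∧ (fun j => Set.ncard { i : Fin k | t i = j }) ∈ Y }

/-- `Y ⊆ ℕ^ℕ` is weakly `S`-codable if `{ν(y) : y ∈ Y, Σy = k}` is `S`-recognizable for
every `k`. -/
def WeaklySCodable {A : Type*} (S : ANS A) (Y : Set (ℕ → ℕ)) : Prop :=
  ∀ k : ℕ, S.Recognizable (nuSet Y k)

/-- `Y ⊆ ℕ^ℕ` is `S`-codable if it is weakly `S`-codable and has finite coding dimension. -/
def SCodable {A : Type*} (S : ANS A) (Y : Set (ℕ → ℕ)) : Prop :=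
  WeaklySCodable S Y ∧ FiniteCodingDim Y

/-- `P_{111}(Y)`: strictly increasing triples `(a, b, c)` such that the word with letter `1`
exactly at positions `a`, `b`, `c` and `0` elsewhere belongs to `Y`. -/
def P111 (Y : Set (ℕ → ℕ)) : Set (Fin 3 → ℕ) :=
  { t | t 0 < t 1 ∧ t 1 < t 2 ∧
        (fun j => if j = t 0 ∨ j = t 1 ∨ j = t 2 then 1 else 0) ∈ Y }

/-- `P_v(Y)` for a finite word `v` over `ℕ`: strictly increasing tuples `n` such that the
word with letter `v i` at position `n i` and `0` elsewhere belongs to `Y`. -/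
def PvSet (v : List ℕ) (Y : Set (ℕ → ℕ)) : Set (Fin v.length → ℕ) :=
  { n | StrictMono n ∧
        (fun j => ∑ i : Fin v.length, if n i = j then v.get i else 0) ∈ Y }

/-- `X` is sofic: the set of label sequences of right-infinite paths in a finite
edge-labeled graph. -/
def IsSofic {C : Type*} (X : Set (ℕ → C)) : Prop :=
  ∃ (V : Type) (_ : Fintype V) (E : Set (V × C × V)),
    X = { x | ∃ p : ℕ → V, ∀ n : ℕ, (p n, x n, p (n + 1)) ∈ E }

/-- The factor `x[a..b-1]` of an infinite word. -/
def segmentOf {C : Type*} (x : ℕ → C) (a b : ℕ) : List C :=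
  List.ofFn fun i : Fin (b - a) => x (a + i)

/-- `U · V^ω`: infinite words that decompose as a word of `U` followed by infinitely many
nonempty words of `V`. -/
def omegaIter {C : Type*} (U V : Set (List C)) : Set (ℕ → C) :=
  { x | ∃ k : ℕ → ℕ, StrictMono k ∧ segmentOf x 0 (k 0) ∈ U ∧
        ∀ i : ℕ, segmentOf x (k i) (k (i + 1)) ∈ V }

/-- `X ⊆ C^ℕ` is ω-regular: a finite union of sets `U · V^ω` with `U`, `V` regular. -/
def IsOmegaRegular {C : Type*} (X : Set (ℕ → C)) : Prop :=
  ∃ (n : ℕ) (U V : Fin n → Set (List C)),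
    (∀ i, IsRegularLang (U i) ∧ IsRegularLang (V i)) ∧
    X = ⋃ i, omegaIter (U i) (V i)

/-- The words `p₁ = a`, `p_{k+1} = p_k bᵏ p_k` (with `a = false`, `b = true`). -/
def pWord : ℕ → List Bool
  | 0 => []
  | 1 => [false]
  | (k + 2) => pWord (k + 1) ++ List.replicate (k + 1) true ++ pWord (k + 1)

/-- Combinatorial continuity of `φ` on `Y` for product topologies over discrete alphabets:
every finite prefix of `φ y` is determined by a finite prefix of `y`. -/
def ContOn {B C : Type*} (φ : (ℕ → B) → (ℕ → C)) (Y : Set (ℕ → B)) : Prop :=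
  ∀ y ∈ Y, ∀ n : ℕ, ∃ m : ℕ, ∀ y' ∈ Y, (∀ i < m, y' i = y i) → ∀ i < n, φ y' i = φ y i

/-!
Over an addable system, the predicates on `ℕ` decided by finite automata reading representations
contain addition and are closed under Boolean combinations and quantification, so a set of tuples
is recognizable as soon as it is first-order definable from addition and from the letters of `x`.

For `α` with `Σα = k`, a strategy tree branches only finitely often and has at most `2 ^ k` nodes
at each depth. Below its last branching it consists of single paths, so cutting it there yields at
most `2 ^ k` words, each of which occurs in `x`. Hence `α` belongs to the winning shift if and only
if there are `2 ^ k` positions in `x` such that the tree of prefixes of the corresponding suffixes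
branches as prescribed by `α`, and this is first-order definable from the entries of `ν(α)`.
-/

section RegularLanguages

variable {α β I : Type*}

/-- The left quotient of `L` by `u`: `Language.leftQuotient` for a language given as a set. -/
def leftQuotient (L : Set (List α)) (u : List α) : Set (List α) :=
  {w | u ++ w ∈ L}

theorem isRegularLang_iff_finite_range_leftQuotient {L : Set (List α)} :
    IsRegularLang L ↔ (Set.range (leftQuotient L)).Finite := by
  refine Iff.trans ?_ (Language.isRegular_iff_finite_range_leftQuotient (L := L))
  exact exists_congr fun _ => exists_congr fun _ => exists_congr fun _ => Language.ext_iff.symm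

namespace IsRegularLang

theorem of_forall_leftQuotient_mem {L : Set (List α)} {s : Set (Set (List α))} (hs : s.Finite)
    (h : ∀ u, leftQuotient L u ∈ s) : IsRegularLang L :=
  isRegularLang_iff_finite_range_leftQuotient.2 (hs.subset (Set.range_subset_iff.2 h))

theorem finite_range_leftQuotient {L : Set (List α)} (hL : IsRegularLang L) :
    (Set.range (leftQuotient L)).Finite :=
  isRegularLang_iff_finite_range_leftQuotient.1 hL

theorem boolean_combination [Finite I] {L : I → Set (List α)} (hL : ∀ i, IsRegularLang (L i))
    (F : (I → Prop) → Prop) : IsRegularLang {w | F fun i => w ∈ L i} :=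
  of_forall_leftQuotient_mem
    ((Set.Finite.pi fun i => (hL i).finite_range_leftQuotient).image
      fun R : I → Set (List α) => {w | F fun i => w ∈ R i})
    fun u => ⟨fun i => leftQuotient (L i) u, fun _ _ => ⟨u, rfl⟩, rfl⟩

theorem inter {L M : Set (List α)} (hL : IsRegularLang L) (hM : IsRegularLang M) :
    IsRegularLang (L ∩ M) :=
  of_forall_leftQuotient_mem
    (hL.finite_range_leftQuotient.image2 (· ∩ ·) hM.finite_range_leftQuotient)
    fun u => ⟨leftQuotient L u, ⟨u, rfl⟩, leftQuotient M u, ⟨u, rfl⟩, rfl⟩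

theorem preimage {L : Set (List β)} (hL : IsRegularLang L) {g : List α → List β}
    (hg : ∀ u v, g (u ++ v) = g u ++ g v) : IsRegularLang (g ⁻¹' L) := by
  refine of_forall_leftQuotient_mem (hL.finite_range_leftQuotient.image (g ⁻¹' ·))
    fun u => ⟨leftQuotient L (g u), ⟨g u, rfl⟩, ?_⟩
  ext w
  simp only [leftQuotient, Set.mem_preimage, Set.mem_ofPred_eq, hg]

theorem preimage_map {L : Set (List β)} (hL : IsRegularLang L) (f : α → β) :
    IsRegularLang (List.map f ⁻¹' L) :=
  hL.preimage fun _ _ => List.map_append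

theorem image_map {L : Set (List α)} (hL : IsRegularLang L) (f : α → β) :
    IsRegularLang (List.map f '' L) := by
  refine of_forall_leftQuotient_mem
    (hL.finite_range_leftQuotient.powerset.image fun s => List.map f '' ⋃₀ s)
    fun v => ⟨leftQuotient L '' {u | u.map f = v}, Set.image_subset_range _ _, ?_⟩
  ext w
  constructor
  · rintro ⟨t, ⟨_, ⟨u, rfl, rfl⟩, htL⟩, rfl⟩
    exact ⟨u ++ t, htL, List.map_append⟩
  · rintro ⟨r, hrL, hr⟩
    obtain ⟨u, t, rfl, hu, ht⟩ := List.map_eq_append_iff.1 hr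
    exact ⟨t, ⟨_, ⟨u, hu, rfl⟩, hrL⟩, ht⟩

theorem biUnion_leftQuotient {L : Set (List α)} (hL : IsRegularLang L) (K : Set (List α)) :
    IsRegularLang (⋃ u ∈ K, leftQuotient L u) := by
  refine of_forall_leftQuotient_mem (hL.finite_range_leftQuotient.powerset.image Set.sUnion)
    fun v => ⟨(fun u => leftQuotient L (u ++ v)) '' K, ?_, ?_⟩
  · rintro _ ⟨u, -, rfl⟩
    exact ⟨u ++ v, rfl⟩
  · ext w
    simp [leftQuotient]

theorem preimage_dropWhile {L : Set (List α)} (hL : IsRegularLang L) (q : α → Bool) :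
    IsRegularLang (List.dropWhile q ⁻¹' L) := by
  refine of_forall_leftQuotient_mem (hL.finite_range_leftQuotient.insert (List.dropWhile q ⁻¹' L))
    fun u => ?_
  by_cases hu : (u.dropWhile q).isEmpty
  · left
    ext w
    simp [leftQuotient, List.dropWhile_append, hu]
  · right
    refine ⟨u.dropWhile q, ?_⟩
    ext w
    simp [leftQuotient, List.dropWhile_append, hu]

end IsRegularLang

theorem isRegularLang_setOf_dropWhile_eq_self (q : α → Bool) :
    IsRegularLang {w : List α | w.dropWhile q = w} := by
  refine IsRegularLang.of_forall_leftQuotient_mem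
    (s := {{w | w.dropWhile q = w}, ∅, Set.univ}) (Set.toFinite _) fun u => ?_
  rcases u with _ | ⟨a, u⟩
  · exact Or.inl rfl
  · by_cases ha : q a
    · right; left
      ext w
      simp [leftQuotient, ha, List.dropWhile_eq_self_iff]
    · right; right
      ext w
      simp [leftQuotient, ha]

end RegularLanguages

section Padding

variable {A ι κ : Type*}

/-- `z` is the word `w` preceded by any number of padding symbols `none`. -/
def IsLeftPad (z : List (Option A)) (w : List A) : Prop :=
  ∃ p : ℕ, z = List.replicate p none ++ w.map some

theorem isLeftPad_iff_dropWhile {z : List (Option A)} {w : List A} :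
    IsLeftPad z w ↔ z.dropWhile Option.isNone = w.map some := by
  constructor
  · rintro ⟨p, rfl⟩
    cases w <;> simp
  · intro h
    refine ⟨(z.takeWhile Option.isNone).length, ?_⟩
    have hnone : z.takeWhile Option.isNone =
        List.replicate (z.takeWhile Option.isNone).length none :=
      List.eq_replicate_iff.2 ⟨rfl, fun b hb => by simpa using List.mem_takeWhile_imp hb⟩
    rw [← hnone, ← h, List.takeWhile_append_dropWhile]

theorem isLeftPad_replicate_append_iff {z : List (Option A)} {w : List A} {p : ℕ} :
    IsLeftPad (List.replicate p none ++ z) w ↔ IsLeftPad z w := by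
  rw [isLeftPad_iff_dropWhile, isLeftPad_iff_dropWhile, List.dropWhile_append_of_pos (by simp)]

theorem isLeftPad_padOne (N : ℕ) (w : List A) : IsLeftPad (padOne N w) w :=
  ⟨_, rfl⟩

namespace IsLeftPad

variable {z : List (Option A)} {w w' : List A}

theorem unique (h : IsLeftPad z w) (h' : IsLeftPad z w') : w = w' := by
  rw [isLeftPad_iff_dropWhile] at h h'
  exact List.map_injective_iff.2 (Option.some_injective A) (h.symm.trans h')

theorem length_le (h : IsLeftPad z w) : w.length ≤ z.length := by
  obtain ⟨p, rfl⟩ := h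
  simp

theorem eq_padOne (h : IsLeftPad z w) : z = padOne z.length w := by
  obtain ⟨p, rfl⟩ := h
  simp [padOne]

theorem reduceOption_eq (h : IsLeftPad z w) : z.reduceOption = w := by
  obtain ⟨p, rfl⟩ := h
  simp [List.reduceOption]

end IsLeftPad

/-- `w`, read as a word with one track for each `i : ι`, carries the word `ws i` on track `i`,
preceded by padding. In contrast to `padTuple`, the padding need not be minimal. -/
def IsLeftPadTuple (w : List (ι → Option A)) (ws : ι → List A) : Prop :=
  ∀ i, IsLeftPad (w.map (· i)) (ws i)

/-- The letter of a multi-track word that is the padding symbol on every track. -/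
def blank : ι → Option A :=
  fun _ => none

open Classical in
/-- Remove the all-padding letters at the beginning of a multi-track word. -/
noncomputable def trim (w : List (ι → Option A)) : List (ι → Option A) :=
  w.dropWhile fun c => c = blank

theorem length_padTuple {d : ℕ} (ws : Fin d → List A) :
    (padTuple ws).length = Finset.univ.sup fun i => (ws i).length := by
  simp [padTuple]

theorem map_padTuple {d : ℕ} (ws : Fin d → List A) (i : Fin d) :
    (padTuple ws).map (· i) = padOne (Finset.univ.sup fun i => (ws i).length) (ws i) := by
  have hle : (ws i).length ≤ Finset.univ.sup fun i => (ws i).length :=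
    Finset.le_sup (f := fun i => (ws i).length) (Finset.mem_univ i)
  have hlength : (padOne (Finset.univ.sup fun i => (ws i).length) (ws i)).length =
      Finset.univ.sup fun i => (ws i).length := by
    simp [padOne, hle]
  refine List.ext_getElem (by rw [List.length_map, length_padTuple, hlength]) fun n _ _ => ?_
  simp only [padTuple, List.getElem_map, List.getElem_ofFn]
  rw [List.getD_eq_getElem]

theorem isLeftPadTuple_padTuple {d : ℕ} (ws : Fin d → List A) :
    IsLeftPadTuple (padTuple ws) ws := by
  intro i
  rw [map_padTuple]
  exact isLeftPad_padOne _ _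

theorem isLeftPadTuple_replicate_append_iff {w : List (ι → Option A)} {ws : ι → List A} {p : ℕ} :
    IsLeftPadTuple (List.replicate p blank ++ w) ws ↔ IsLeftPadTuple w ws := by
  simp only [IsLeftPadTuple, List.map_append, List.map_replicate, blank,
    isLeftPad_replicate_append_iff]

namespace IsLeftPadTuple

variable {w : List (ι → Option A)} {ws : ι → List A}

theorem eq_of_length_eq {u : List (ι → Option A)} (hu : IsLeftPadTuple u ws)
    (hw : IsLeftPadTuple w ws) (hlength : u.length = w.length) : u = w := by
  have htrack : ∀ i, u.map (· i) = w.map (· i) := fun i => by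
    rw [(hu i).eq_padOne, (hw i).eq_padOne, List.length_map, List.length_map, hlength]
  refine List.ext_getElem hlength fun n hnu hnw => funext fun i => ?_
  simpa [hnu, hnw] using congrArg (·[n]?) (htrack i)

theorem length_padTuple_le {d : ℕ} {w : List (Fin d → Option A)} {ws : Fin d → List A}
    (hw : IsLeftPadTuple w ws) : (padTuple ws).length ≤ w.length := by
  rw [length_padTuple]
  exact Finset.sup_le fun i _ => by simpa using (hw i).length_le

theorem eq_replicate_append_padTuple {d : ℕ} {w : List (Fin d → Option A)} {ws : Fin d → List A}
    (hw : IsLeftPadTuple w ws) :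
    w = List.replicate (w.length - (padTuple ws).length) blank ++ padTuple ws := by
  refine hw.eq_of_length_eq
    (isLeftPadTuple_replicate_append_iff.2 (isLeftPadTuple_padTuple ws)) ?_
  have := hw.length_padTuple_le
  simp only [List.length_append, List.length_replicate]
  omega

end IsLeftPadTuple

theorem exists_map_comp_inl_eq_and_map_comp_inr_eq {u : List (ι → Option A)}
    {w : List (κ → Option A)} (hlength : u.length = w.length) :
    ∃ z : List (ι ⊕ κ → Option A), z.map (· ∘ Sum.inl) = u ∧ z.map (· ∘ Sum.inr) = w := by
  refine ⟨List.zipWith Sum.elim u w, ?_, ?_⟩ <;>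
    exact List.ext_getElem (by simp [hlength]) (by simp)

theorem trim_replicate_append (p : ℕ) (w : List (ι → Option A)) :
    trim (List.replicate p blank ++ w) = trim w :=
  List.dropWhile_append_of_pos (by simp)

theorem trim_padTuple {d : ℕ} (ws : Fin d → List A) : trim (padTuple ws) = padTuple ws := by
  refine List.dropWhile_eq_self_iff.2 fun hpos hblank => ?_
  obtain ⟨c, w, hcw⟩ := List.exists_cons_of_length_pos hpos
  obtain rfl : c = blank := by simpa [hcw] using hblank
  have hw : IsLeftPadTuple w ws := by
    rw [← isLeftPadTuple_replicate_append_iff (p := 1)]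
    simpa [hcw] using isLeftPadTuple_padTuple ws
  have := hw.length_padTuple_le
  simp [hcw] at this

theorem IsLeftPadTuple.trim_eq_padTuple {d : ℕ} {w : List (Fin d → Option A)}
    {ws : Fin d → List A} (hw : IsLeftPadTuple w ws) : trim w = padTuple ws := by
  rw [hw.eq_replicate_append_padTuple, trim_replicate_append, trim_padTuple]

theorem IsRegularLang.preimage_trim {L : Set (List (ι → Option A))} (hL : IsRegularLang L) :
    IsRegularLang (trim ⁻¹' L) :=
  hL.preimage_dropWhile _

theorem isRegularLang_setOf_trim_eq_self :
    IsRegularLang {w : List (ι → Option A) | trim w = w} :=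
  isRegularLang_setOf_dropWhile_eq_self _

end Padding

namespace ANS

section RegularPredicates

variable {A ι κ : Type*} {S : ANS A}

/-- The multi-track word `w` represents the tuple `v` in `S`, with arbitrary padding. -/
def Represents (S : ANS A) (w : List (ι → Option A)) (v : ι → ℕ) : Prop :=
  IsLeftPadTuple w fun i => S.rep (v i)

/-- The `S`-representations of natural numbers, with arbitrary padding. -/
def paddedNumerals (S : ANS A) : Set (List (Option A)) :=
  {z | ∃ n, IsLeftPad z (S.rep n)}

/-- `P` is decided by a finite automaton reading `S`-representations. In contrast to
`ANS.Recognizable`, the padding is arbitrary and the behaviour of the automaton on words that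
represent no tuple is irrelevant, which makes closure under negation and reindexing immediate. -/
def IsRegularPred (S : ANS A) (P : (ι → ℕ) → Prop) : Prop :=
  ∃ R : Set (List (ι → Option A)), IsRegularLang R ∧ ∀ w v, S.Represents w v → (w ∈ R ↔ P v)

theorem represents_padTuple (S : ANS A) {d : ℕ} (v : Fin d → ℕ) :
    S.Represents (padTuple fun i => S.rep (v i)) v :=
  isLeftPadTuple_padTuple _

theorem Represents.unique {w : List (ι → Option A)} {v v' : ι → ℕ} (h : S.Represents w v)
    (h' : S.Represents w v') : v = v' :=
  funext fun i => S.inj ((h i).unique (h' i))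

theorem Represents.comp {w : List (ι → Option A)} {v : ι → ℕ} (h : S.Represents w v)
    (f : κ → ι) : S.Represents (w.map (· ∘ f)) (v ∘ f) := fun i => by
  simpa [Function.comp_def] using h (f i)

theorem represents_iff_sum {w : List (ι ⊕ κ → Option A)} {v : ι ⊕ κ → ℕ} :
    S.Represents w v ↔ S.Represents (w.map (· ∘ Sum.inl)) (v ∘ Sum.inl) ∧
      S.Represents (w.map (· ∘ Sum.inr)) (v ∘ Sum.inr) := by
  simp only [Represents, IsLeftPadTuple, Sum.forall, List.map_map, Function.comp_def]

theorem Recognizable.isRegularLang_paddedNumerals {d : ℕ} {Y : Set (Fin d → ℕ)}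
    (hY : S.Recognizable Y) (i : Fin d) (hi : ∀ n, ∃ t ∈ Y, t i = n) :
    IsRegularLang S.paddedNumerals := by
  convert ((hY.image_map (· i)).biUnion_leftQuotient
    (Set.range (List.replicate · none))).preimage_dropWhile Option.isNone
  ext z
  simp only [paddedNumerals, isLeftPad_iff_dropWhile, leftQuotient, Set.mem_ofPred_eq,
    Set.mem_preimage, Set.mem_iUnion, Set.exists_range_iff, Set.mem_image, exists_prop]
  constructor
  · rintro ⟨n, hn⟩
    obtain ⟨t, htY, rfl⟩ := hi n
    obtain ⟨p, hp⟩ := S.represents_padTuple t i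
    exact ⟨p, _, ⟨t, htY, rfl⟩, by rw [hp, hn]⟩
  · rintro ⟨p, _, ⟨t, -, rfl⟩, hp⟩
    have hpad := isLeftPad_iff_dropWhile.1 (S.represents_padTuple t i)
    rw [hp, List.dropWhile_append_of_pos (by simp), List.dropWhile_idempotent] at hpad
    exact ⟨t i, hpad⟩

theorem Addable.isRegularLang_paddedNumerals (hadd : S.Addable) :
    IsRegularLang S.paddedNumerals :=
  Recognizable.isRegularLang_paddedNumerals hadd 2 fun n => ⟨![0, n, n], by simp, rfl⟩

theorem isRegularLang_setOf_represents [Finite ι] (hS : IsRegularLang S.paddedNumerals) :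
    IsRegularLang {w : List (ι → Option A) | ∃ v, S.Represents w v} := by
  convert IsRegularLang.boolean_combination (fun i : ι =>
    hS.preimage_map fun c : ι → Option A => c i) (fun f => ∀ i, f i)
  exact (Classical.skolem (p := fun i n => IsLeftPad _ (S.rep n))).symm

theorem Recognizable.isRegularPred {d : ℕ} {Y : Set (Fin d → ℕ)} (hY : S.Recognizable Y) :
    S.IsRegularPred (· ∈ Y) := by
  refine ⟨_, hY.preimage_trim, fun w v hw => ?_⟩
  change (∃ t ∈ Y, trim w = _) ↔ v ∈ Y
  rw [hw.trim_eq_padTuple]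
  constructor
  · rintro ⟨t, htY, ht⟩
    rwa [(S.represents_padTuple v).unique (ht ▸ S.represents_padTuple t)]
  · exact fun hv => ⟨v, hv, rfl⟩

namespace IsRegularPred

theorem recognizable (hS : IsRegularLang S.paddedNumerals) {d : ℕ} {P : (Fin d → ℕ) → Prop}
    (hP : S.IsRegularPred P) : S.Recognizable {t | P t} := by
  obtain ⟨R, hR, hRP⟩ := hP
  unfold Recognizable
  convert (hR.inter (isRegularLang_setOf_represents hS)).inter
    isRegularLang_setOf_trim_eq_self using 1
  ext w
  change (∃ t, P t ∧ w = _) ↔ (w ∈ R ∧ ∃ v, S.Represents w v) ∧ trim w = w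
  constructor
  · rintro ⟨t, ht, rfl⟩
    have ht' := S.represents_padTuple t
    exact ⟨⟨(hRP _ _ ht').2 ht, t, ht'⟩, trim_padTuple _⟩
  · rintro ⟨⟨hwR, v, hwv⟩, hw⟩
    exact ⟨v, (hRP w v hwv).1 hwR, by rw [← hwv.trim_eq_padTuple, hw]⟩

theorem congr {P Q : (ι → ℕ) → Prop} (hP : S.IsRegularPred P) (h : ∀ v, P v ↔ Q v) :
    S.IsRegularPred Q := by
  obtain rfl : P = Q := funext fun v => propext (h v)
  exact hP

theorem boolean_combination {I : Type*} [Finite I] {P : I → (ι → ℕ) → Prop}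
    (hP : ∀ i, S.IsRegularPred (P i)) (F : (I → Prop) → Prop) :
    S.IsRegularPred fun v => F fun i => P i v := by
  choose R hR hRP using hP
  refine ⟨_, IsRegularLang.boolean_combination hR F, fun w v hw => ?_⟩
  simp only [Set.mem_ofPred_eq, hRP _ w v hw]

theorem not {P : (ι → ℕ) → Prop} (hP : S.IsRegularPred P) : S.IsRegularPred fun v => ¬ P v :=
  boolean_combination (I := Unit) (fun _ => hP) fun f => ¬ f ()

theorem forall_finite {I : Type*} [Finite I] {P : I → (ι → ℕ) → Prop}
    (hP : ∀ i, S.IsRegularPred (P i)) : S.IsRegularPred fun v => ∀ i, P i v :=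
  boolean_combination hP fun f => ∀ i, f i

theorem exists_finite {I : Type*} [Finite I] {P : I → (ι → ℕ) → Prop}
    (hP : ∀ i, S.IsRegularPred (P i)) : S.IsRegularPred fun v => ∃ i, P i v :=
  boolean_combination hP fun f => ∃ i, f i

theorem and {P Q : (ι → ℕ) → Prop} (hP : S.IsRegularPred P) (hQ : S.IsRegularPred Q) :
    S.IsRegularPred fun v => P v ∧ Q v :=
  (forall_finite (P := fun b : Bool => if b then P else Q)
    (Bool.forall_bool.2 ⟨by simpa, by simpa⟩)).congr fun v => by simp [and_comm]

theorem imp {P Q : (ι → ℕ) → Prop} (hP : S.IsRegularPred P) (hQ : S.IsRegularPred Q) :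
    S.IsRegularPred fun v => P v → Q v :=
  (hP.and hQ.not).not.congr fun v => by simp

theorem rel_ncard {I J : Type*} [Finite I] [Finite J] {P : I → (ι → ℕ) → Prop}
    {Q : J → (ι → ℕ) → Prop} (hP : ∀ i, S.IsRegularPred (P i))
    (hQ : ∀ j, S.IsRegularPred (Q j)) (r : ℕ → ℕ → Prop) :
    S.IsRegularPred fun v => r {i | P i v}.ncard {j | Q j v}.ncard :=
  boolean_combination (P := Sum.elim P Q) (Sum.forall.2 ⟨hP, hQ⟩)
    fun f => r {i | f (Sum.inl i)}.ncard {j | f (Sum.inr j)}.ncard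

theorem reindex {P : (ι → ℕ) → Prop} (hP : S.IsRegularPred P) (f : ι → κ) :
    S.IsRegularPred fun v => P (v ∘ f) := by
  obtain ⟨R, hR, hRP⟩ := hP
  exact ⟨_, hR.preimage_map (· ∘ f), fun w v hw => hRP _ _ (hw.comp f)⟩

theorem exists_tuple (hS : IsRegularLang S.paddedNumerals) {d : ℕ}
    {P : (ι → ℕ) → (Fin d → ℕ) → Prop}
    (hP : S.IsRegularPred fun v : ι ⊕ Fin d → ℕ => P (v ∘ Sum.inl) (v ∘ Sum.inr)) :
    S.IsRegularPred fun v => ∃ m, P v m := by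
  obtain ⟨R, hR, hRP⟩ := hP
  have hvalid := (isRegularLang_setOf_represents (ι := Fin d) hS).preimage_map
    fun c : ι ⊕ Fin d → Option A => c ∘ Sum.inr
  -- A witness may be longer than `w`, hence the quotient by the blank words.
  refine ⟨_, ((hR.inter hvalid).image_map (· ∘ Sum.inl)).biUnion_leftQuotient
    (Set.range (List.replicate · blank)), fun w v hw => ?_⟩
  simp only [leftQuotient, Set.mem_ofPred_eq, Set.mem_iUnion, Set.exists_range_iff,
    Set.mem_image, Set.mem_inter_iff, Set.mem_preimage, exists_prop]
  constructor
  · rintro ⟨p, u, ⟨huR, m, hm⟩, hu⟩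
    refine ⟨m, (hRP u (Sum.elim v m) (represents_iff_sum.2 ⟨?_, hm⟩)).1 huR⟩
    rw [hu]
    exact isLeftPadTuple_replicate_append_iff.2 hw
  · rintro ⟨m, hm⟩
    set wm := padTuple fun i => S.rep (m i)
    obtain ⟨u, hinl, hinr⟩ := exists_map_comp_inl_eq_and_map_comp_inr_eq
      (u := List.replicate wm.length blank ++ w) (w := List.replicate w.length blank ++ wm)
      (by simp [add_comm])
    have hum : S.Represents (u.map (· ∘ Sum.inr)) m := by
      rw [hinr]
      exact isLeftPadTuple_replicate_append_iff.2 (S.represents_padTuple m)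
    have huv : S.Represents u (Sum.elim v m) := by
      refine represents_iff_sum.2 ⟨?_, hum⟩
      rw [hinl]
      exact isLeftPadTuple_replicate_append_iff.2 hw
    exact ⟨wm.length, u, ⟨(hRP u _ huv).2 hm, m, hum⟩, hinl⟩

theorem exists_nat (hS : IsRegularLang S.paddedNumerals) {P : (ι → ℕ) → ℕ → Prop}
    (hP : S.IsRegularPred fun v : ι ⊕ Fin 1 → ℕ => P (v ∘ Sum.inl) (v (Sum.inr 0))) :
    S.IsRegularPred fun v => ∃ n, P v n :=
  (exists_tuple hS (P := fun v m => P v (m 0)) hP).congr fun _ =>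
    ⟨fun ⟨m, hm⟩ => ⟨m 0, hm⟩, fun ⟨n, hn⟩ => ⟨fun _ => n, hn⟩⟩

theorem forall_nat (hS : IsRegularLang S.paddedNumerals) {P : (ι → ℕ) → ℕ → Prop}
    (hP : S.IsRegularPred fun v : ι ⊕ Fin 1 → ℕ => P (v ∘ Sum.inl) (v (Sum.inr 0))) :
    S.IsRegularPred fun v => ∀ n, P v n :=
  (exists_nat hS (P := fun v n => ¬ P v n) hP.not).not.congr fun v => by simp

end IsRegularPred

end RegularPredicates

section AddableSystems

variable {A C ι : Type*} {S : ANS A} {x : ℕ → C}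

theorem Addable.isRegularPred_add_eq (hadd : S.Addable) (i j k : ι) :
    S.IsRegularPred fun v => v i + v j = v k :=
  (Recognizable.isRegularPred hadd).reindex ![i, j, k]

theorem Addable.isRegularPred_le (hadd : S.Addable) (i j : ι) :
    S.IsRegularPred fun v => v i ≤ v j :=
  (IsRegularPred.exists_nat hadd.isRegularLang_paddedNumerals (P := fun v n => v i + n = v j)
    (hadd.isRegularPred_add_eq (Sum.inl i) (Sum.inr 0) (Sum.inl j))).congr fun v => by
      simp only [le_iff_exists_add, eq_comm]

theorem Addable.isRegularPred_lt (hadd : S.Addable) (i j : ι) :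
    S.IsRegularPred fun v => v i < v j :=
  (hadd.isRegularPred_le j i).not.congr fun _ => not_le

theorem Addable.isRegularPred_eq (hadd : S.Addable) (i j : ι) :
    S.IsRegularPred fun v => v i = v j :=
  ((hadd.isRegularPred_le i j).and (hadd.isRegularPred_le j i)).congr fun _ =>
    le_antisymm_iff.symm

theorem Addable.isRegularPred_monotone (hadd : S.Addable) {k : ℕ} :
    S.IsRegularPred fun t : Fin k → ℕ => Monotone t :=
  .boolean_combination (P := fun (ij : Fin k × Fin k) t => t ij.1 ≤ t ij.2)
    (fun ij => hadd.isRegularPred_le ij.1 ij.2) fun f => ∀ ⦃i j⦄, i ≤ j → f (i, j)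

theorem isRegularPred_letter_eq (hx : SAutomatic S x) (i : ι) (c : C) :
    S.IsRegularPred fun v => x (v i) = c := by
  obtain ⟨Q, _, M, τ, hM⟩ := hx
  have hc : IsRegularLang {u | τ (M.eval u) = c} :=
    ⟨Q, inferInstance, { M with accept := {s | τ s = c} }, fun _ => Iff.rfl⟩
  refine ⟨_, hc.preimage (g := fun w => (w.map (· i)).reduceOption)
    fun u v => by rw [List.map_append, List.reduceOption_append], fun w v hw => ?_⟩
  simp only [Set.mem_preimage, Set.mem_ofPred_eq, (hw i).reduceOption_eq, hM]

theorem finite_range_of_sAutomatic (hx : SAutomatic S x) : (Set.range x).Finite := by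
  obtain ⟨Q, _, M, τ, hM⟩ := hx
  exact (Set.finite_range τ).subset (Set.range_subset_iff.2 fun n => ⟨_, hM n⟩)

theorem Addable.isRegularPred_letter_add_eq (hadd : S.Addable) (hx : SAutomatic S x) (i j : ι)
    (c : C) : S.IsRegularPred fun v => x (v i + v j) = c :=
  (IsRegularPred.exists_nat hadd.isRegularLang_paddedNumerals
    (P := fun v n => v i + v j = n ∧ x n = c)
    ((hadd.isRegularPred_add_eq (Sum.inl i) (Sum.inl j) (Sum.inr 0)).and
      (isRegularPred_letter_eq hx (Sum.inr 0) c))).congr fun v => by simp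

theorem Addable.isRegularPred_letter_add_eq_letter_add (hadd : S.Addable)
    (hx : SAutomatic S x) (i j k l : ι) :
    S.IsRegularPred fun v => x (v i + v j) = x (v k + v l) := by
  have := (finite_range_of_sAutomatic hx).to_subtype
  refine (IsRegularPred.exists_finite fun c : Set.range x =>
    (hadd.isRegularPred_letter_add_eq hx i j c).and
      (hadd.isRegularPred_letter_add_eq hx k l c)).congr fun v => ?_
  simp [eq_comm]

theorem Addable.isRegularPred_factor_eq (hadd : S.Addable) (hx : SAutomatic S x) (a b i : ι) :
    S.IsRegularPred fun v => ∀ j < v i, x (v a + j) = x (v b + j) :=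
  .forall_nat hadd.isRegularLang_paddedNumerals
    ((hadd.isRegularPred_lt (Sum.inr 0) (Sum.inl i)).imp
      (hadd.isRegularPred_letter_add_eq_letter_add hx (Sum.inl a) (Sum.inr 0) (Sum.inl b)
        (Sum.inr 0)))

end AddableSystems

end ANS

section WinningShifts

variable {C ι κ : Type*} {x : ℕ → C} {α : ℕ → ℕ} {N k : ℕ}

/-- The prefix of length `n` of the infinite word `y`. -/
def wordPrefix (y : ℕ → C) (n : ℕ) : List C :=
  List.ofFn fun i : Fin n => y i

theorem length_wordPrefix (y : ℕ → C) (n : ℕ) : (wordPrefix y n).length = n :=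
  List.length_ofFn

theorem wordPrefix_succ (y : ℕ → C) (n : ℕ) : wordPrefix y (n + 1) = wordPrefix y n ++ [y n] := by
  rw [wordPrefix, List.ofFn_succ', List.concat_eq_append]
  rfl

theorem wordPrefix_prefix (y : ℕ → C) {n m : ℕ} (h : n ≤ m) :
    wordPrefix y n <+: wordPrefix y m := by
  induction h with
  | refl => exact List.prefix_rfl
  | step _ ih => exact ih.trans (wordPrefix_succ y _ ▸ List.prefix_append _ _)

theorem wordPrefix_eq_iff {y z : ℕ → C} {n : ℕ} :
    wordPrefix y n = wordPrefix z n ↔ ∀ j < n, y j = z j := by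
  simp [wordPrefix, List.ofFn_inj, funext_iff, Fin.forall_iff]

theorem wordPrefix_succ_eq_append_singleton_iff {y z : ℕ → C} {n : ℕ} {c : C} :
    wordPrefix y (n + 1) = wordPrefix z n ++ [c] ↔ (∀ j < n, y j = z j) ∧ y n = c := by
  rw [wordPrefix_succ, List.append_singleton_inj, wordPrefix_eq_iff]

theorem eq_wordPrefix_of_prefix {y : ℕ → C} {n : ℕ} {u : List C} (h : u <+: wordPrefix y n) :
    u = wordPrefix y u.length := by
  have hle : u.length ≤ n := length_wordPrefix y n ▸ h.length_le
  exact (List.prefix_of_prefix_length_le h (wordPrefix_prefix y hle)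
    (length_wordPrefix y _).ge).eq_of_length (length_wordPrefix y _).symm

/-- In the tree of prefixes of the infinite words `y b`, every node at depth `n` has exactly
`α n + 1` children. The nodes at depth `n` are the length `n` prefixes of the `y a`. -/
def HasBranching (y : ι → ℕ → C) (α : ℕ → ℕ) : Prop :=
  ∀ n a, {c | ∃ b, (∀ j < n, y b j = y a j) ∧ y b n = c}.ncard = α n + 1

theorem HasBranching.comp_surjective {y : ι → ℕ → C} (h : HasBranching y α) {f : κ → ι}
    (hf : Function.Surjective f) : HasBranching (y ∘ f) α := fun n a => by
  simpa only [Function.comp_apply, hf.exists] using h n (f a)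

theorem HasBranching.mem_winningShift [Nonempty ι] {m : ι → ℕ}
    (h : HasBranching (fun b j => x (m b + j)) α) : α ∈ winningShift (orbitClosure x) := by
  set y : ι → ℕ → C := fun b j => x (m b + j)
  refine ⟨{w | ∃ b, wordPrefix (y b) w.length = w}, ⟨Classical.arbitrary ι, rfl⟩, ?_, ?_, ?_⟩
  · rintro u v ⟨b, hb⟩
    exact ⟨b, (eq_wordPrefix_of_prefix (hb ▸ List.prefix_append u v)).symm⟩
  · rintro w ⟨a, ha⟩
    rw [← h w.length a]
    congr 1 with c
    refine exists_congr fun b => ?_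
    rw [← wordPrefix_succ_eq_append_singleton_iff, ha, List.length_append, List.length_singleton]
  · intro z hz n
    obtain ⟨b, hb⟩ := hz n
    rw [List.length_ofFn] at hb
    exact ⟨m b, wordPrefix_eq_iff.1 hb.symm⟩

/-- The nodes at depth `n` of a tree of finite words. -/
def treeLevel (T : Set (List C)) (n : ℕ) : Set (List C) :=
  {w | w ∈ T ∧ w.length = n}

theorem wordPrefix_mem_treeLevel {T : Set (List C)} {y : ℕ → C} (h : ∀ n, wordPrefix y n ∈ T)
    (n : ℕ) : wordPrefix y n ∈ treeLevel T n :=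
  ⟨h n, length_wordPrefix y n⟩

namespace IsStrategyTree

variable {X : Set (ℕ → C)} {T : Set (List C)} {w : List C}

theorem mem_of_prefix (hT : IsStrategyTree X α T) {u : List C} (h : u <+: w) (hw : w ∈ T) :
    u ∈ T := by
  obtain ⟨v, rfl⟩ := h
  exact hT.2.1 u v hw

theorem ncard_children (hT : IsStrategyTree X α T) (hw : w ∈ T) :
    {c | w ++ [c] ∈ T}.ncard = α w.length + 1 :=
  hT.2.2.1 w hw

theorem mem_of_forall_wordPrefix_mem (hT : IsStrategyTree X α T) {y : ℕ → C}
    (h : ∀ n, wordPrefix y n ∈ T) : y ∈ X :=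
  hT.2.2.2 y h

theorem finite_children (hT : IsStrategyTree X α T) (hw : w ∈ T) :
    {c | w ++ [c] ∈ T}.Finite :=
  Set.finite_of_ncard_ne_zero (by simp [hT.ncard_children hw])

theorem exists_append_singleton_mem (hT : IsStrategyTree X α T) (hw : w ∈ T) :
    ∃ c, w ++ [c] ∈ T :=
  Set.nonempty_of_ncard_ne_zero (s := {c | w ++ [c] ∈ T}) (by simp [hT.ncard_children hw])

theorem exists_branch (hT : IsStrategyTree X α T) (hw : w ∈ T) :
    ∃ y : ℕ → C, wordPrefix y w.length = w ∧ ∀ n, wordPrefix y n ∈ T := by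
  choose f hf using fun u : T => hT.exists_append_singleton_mem u.2
  set u : ℕ → T := fun n => (fun v : T => ⟨v.1 ++ [f v], hf v⟩)^[n] ⟨w, hw⟩
  have hsucc (n : ℕ) : (u (n + 1)).1 = (u n).1 ++ [f (u n)] :=
    congrArg Subtype.val (Function.iterate_succ_apply' _ n _)
  have hlength (n : ℕ) : (u n).1.length = w.length + n := by
    induction n with
    | zero => rfl
    | succ n ih => rw [hsucc, List.length_append, ih, List.length_singleton, add_assoc]
  have hprefix {m n : ℕ} (h : m ≤ n) : (u m).1 <+: (u n).1 := by
    induction h with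
    | refl => exact List.prefix_rfl
    | step _ ih => exact ih.trans (hsucc _ ▸ List.prefix_append _ _)
  let y : ℕ → C := fun j => (u (j + 1)).1[j]'(by rw [hlength]; omega)
  have hy (n : ℕ) : wordPrefix y (w.length + n) = (u n).1 := by
    refine List.ext_getElem (by rw [length_wordPrefix, hlength]) fun j hj hj' => ?_
    simp only [wordPrefix, List.getElem_ofFn, y]
    rcases le_total (j + 1) n with h | h
    · exact (hprefix h).getElem _
    · exact ((hprefix h).getElem _).symm
  exact ⟨y, hy 0, fun n =>
    hT.mem_of_prefix (hy n ▸ wordPrefix_prefix y (Nat.le_add_left n _)) (u n).2⟩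

theorem exists_mem_treeLevel (hT : IsStrategyTree X α T) (hw : w ∈ T) (h : w.length ≤ N) :
    ∃ v : treeLevel T N, w <+: v := by
  obtain ⟨y, hyw, hyT⟩ := hT.exists_branch hw
  exact ⟨⟨_, wordPrefix_mem_treeLevel hyT N⟩, hyw ▸ wordPrefix_prefix y h⟩

theorem treeLevel_zero (hT : IsStrategyTree X α T) : treeLevel T 0 = {[]} := by
  ext w
  simp only [treeLevel, Set.mem_ofPred_eq, List.length_eq_zero_iff, Set.mem_singleton_iff]
  exact and_iff_right_of_imp fun h => h ▸ hT.1

theorem treeLevel_succ (hT : IsStrategyTree X α T) (n : ℕ) :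
    treeLevel T (n + 1) = ⋃ w ∈ treeLevel T n, (w ++ [·]) '' {c | w ++ [c] ∈ T} := by
  ext u
  simp only [treeLevel, Set.mem_ofPred_eq, Set.mem_iUnion, Set.mem_image, exists_prop]
  constructor
  · rintro ⟨huT, hu⟩
    obtain rfl | ⟨w, c, rfl⟩ := u.eq_nil_or_concat'
    · simp at hu
    · exact ⟨w, ⟨hT.mem_of_prefix (List.prefix_append _ _) huT, by simpa using hu⟩, c, huT,
        rfl⟩
  · rintro ⟨w, ⟨-, rfl⟩, c, hcT, rfl⟩
    exact ⟨hcT, by simp⟩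

theorem finite_treeLevel (hT : IsStrategyTree X α T) (n : ℕ) : (treeLevel T n).Finite := by
  induction n with
  | zero => simp [hT.treeLevel_zero]
  | succ n ih =>
    rw [hT.treeLevel_succ]
    exact ih.biUnion fun w hw => (hT.finite_children hw.1).image _

theorem ncard_image_children_le (hT : IsStrategyTree X α T) (hw : w ∈ T) :
    ((w ++ [·]) '' {c | w ++ [c] ∈ T}).ncard ≤ 2 ^ α w.length :=
  (Set.ncard_image_le (hT.finite_children hw)).trans
    ((hT.ncard_children hw).trans_le Nat.lt_two_pow_self)

theorem ncard_treeLevel_le (hT : IsStrategyTree X α T) (n : ℕ) :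
    (treeLevel T n).ncard ≤ 2 ^ ∑ i ∈ Finset.range n, α i := by
  induction n with
  | zero => simp [hT.treeLevel_zero]
  | succ n ih =>
    have hfin := hT.finite_treeLevel n
    have hunion : treeLevel T (n + 1) =
        ⋃ w ∈ hfin.toFinset, (w ++ [·]) '' {c | w ++ [c] ∈ T} := by
      simp only [hT.treeLevel_succ, hfin.mem_toFinset]
    have hchildren : ∀ w ∈ hfin.toFinset,
        ((w ++ [·]) '' {c | w ++ [c] ∈ T}).ncard ≤ 2 ^ α n := fun w hw => by
      obtain ⟨hwT, rfl⟩ := hfin.mem_toFinset.1 hw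
      exact hT.ncard_image_children_le hwT
    calc (treeLevel T (n + 1)).ncard
        ≤ hfin.toFinset.card * 2 ^ α n :=
          hunion ▸ (Finset.set_ncard_biUnion_le _ _).trans
            (Finset.sum_le_card_nsmul _ _ _ hchildren)
      _ = (treeLevel T n).ncard * 2 ^ α n := by rw [Set.ncard_eq_toFinset_card _ hfin]
      _ ≤ 2 ^ (∑ i ∈ Finset.range n, α i) * 2 ^ α n := Nat.mul_le_mul_right _ ih
      _ = 2 ^ ∑ i ∈ Finset.range (n + 1), α i := by rw [Finset.sum_range_succ, pow_add]

theorem setOf_append_singleton_mem_eq (hT : IsStrategyTree X α T) {y : treeLevel T N → ℕ → C}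
    (hy : ∀ w, wordPrefix (y w) N = w) {n : ℕ} (hn : n < N) (a : treeLevel T N) :
    {c | wordPrefix (y a) n ++ [c] ∈ T} = {c | ∃ b, (∀ j < n, y b j = y a j) ∧ y b n = c} := by
  ext c
  simp only [Set.mem_ofPred_eq, ← wordPrefix_succ_eq_append_singleton_iff]
  constructor
  · intro hc
    obtain ⟨b, hcb⟩ := hT.exists_mem_treeLevel (N := N) hc (by simpa [length_wordPrefix])
    rw [← hy b] at hcb
    exact ⟨b, by simpa [length_wordPrefix] using (eq_wordPrefix_of_prefix hcb).symm⟩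
  · rintro ⟨b, hb⟩
    exact hb ▸ hT.mem_of_prefix (wordPrefix_prefix _ hn) ((hy b).symm ▸ b.2.1)

theorem hasBranching_treeLevel (hT : IsStrategyTree X α T) (hα : ∀ n ≥ N, α n = 0)
    {y : treeLevel T N → ℕ → C} (hy : ∀ w, wordPrefix (y w) N = w) : HasBranching y α := by
  intro n a
  rcases lt_or_ge n N with hn | hn
  · have haT : wordPrefix (y a) n ∈ T :=
      hT.mem_of_prefix (wordPrefix_prefix _ hn.le) ((hy a).symm ▸ a.2.1)
    rw [← hT.setOf_append_singleton_mem_eq hy hn, hT.ncard_children haT, length_wordPrefix]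
  · have heq (b) (hb : ∀ j < n, y b j = y a j) : b = a :=
      Subtype.ext <| hy b ▸ hy a ▸ wordPrefix_eq_iff.2 fun j hj => hb j (hj.trans_le hn)
    rw [hα n hn, zero_add, Set.ncard_eq_one]
    refine ⟨y a n, Set.ext fun c => ⟨?_, ?_⟩⟩
    · rintro ⟨b, hb, rfl⟩
      rw [heq b hb, Set.mem_singleton_iff]
    · rintro rfl
      exact ⟨a, fun _ _ => rfl, rfl⟩

theorem exists_surjective_treeLevel (hT : IsStrategyTree X α T)
    (hk : ∑ i ∈ Finset.range N, α i ≤ k) :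
    ∃ f : Fin (2 ^ k) → treeLevel T N, Function.Surjective f := by
  have := (hT.finite_treeLevel N).to_subtype
  have := Fintype.ofFinite (treeLevel T N)
  obtain ⟨v, -⟩ := hT.exists_mem_treeLevel hT.1 (Nat.zero_le N)
  have hcard : Fintype.card (treeLevel T N) ≤ Fintype.card (Fin (2 ^ k)) := by
    rw [Fintype.card_fin, Fintype.card_eq_nat_card]
    exact (hT.ncard_treeLevel_le N).trans (Nat.pow_le_pow_right two_pos hk)
  exact Function.exists_surjective_iff.2
    ⟨⟨fun _ => v⟩, Function.Embedding.nonempty_of_card_le hcard⟩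

end IsStrategyTree

theorem mem_winningShift_orbitClosure_iff (hα : ∀ n ≥ N, α n = 0)
    (hk : ∑ i ∈ Finset.range N, α i ≤ k) :
    α ∈ winningShift (orbitClosure x) ↔
      ∃ m : Fin (2 ^ k) → ℕ, HasBranching (fun b j => x (m b + j)) α := by
  refine ⟨?_, fun ⟨_, hm⟩ => hm.mem_winningShift⟩
  rintro ⟨T, hT⟩
  have hocc (w : treeLevel T N) : ∃ p, wordPrefix (fun j => x (p + j)) N = w := by
    obtain ⟨y, hyw, hyT⟩ := hT.exists_branch w.2.1
    obtain ⟨p, hp⟩ := hT.mem_of_forall_wordPrefix_mem hyT N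
    rw [w.2.2] at hyw
    exact ⟨p, (wordPrefix_eq_iff.2 hp).symm.trans hyw⟩
  choose p hp using hocc
  obtain ⟨f, hf⟩ := hT.exists_surjective_treeLevel hk
  exact ⟨p ∘ f, (hT.hasBranching_treeLevel hα hp).comp_surjective hf⟩

theorem sum_ncard_fiber_le (t : Fin k → ℕ) (n : ℕ) :
    ∑ j ∈ Finset.range n, {i | t i = j}.ncard ≤ k := by
  simp only [Set.ncard_eq_toFinset_card', Set.toFinset_ofPred]
  rw [Finset.sum_card_fiberwise_eq_card_filter]
  exact (Finset.card_filter_le _ _).trans (Finset.card_fin k).le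

theorem mem_nuSet_winningShift_orbitClosure_iff {t : Fin k → ℕ} :
    t ∈ nuSet (winningShift (orbitClosure x)) k ↔ Monotone t ∧
      ∃ m : Fin (2 ^ k) → ℕ,
        HasBranching (fun b j => x (m b + j)) fun j => {i | t i = j}.ncard := by
  refine and_congr_right fun _ =>
    mem_winningShift_orbitClosure_iff (N := Finset.univ.sup t + 1) (fun n hn => ?_)
      (sum_ncard_fiber_le t _)
  have hempty : {i | t i = n} = ∅ := Set.eq_empty_of_forall_notMem fun i hi =>
    (Finset.le_sup (f := t) (Finset.mem_univ i)).not_gt (hi.symm ▸ hn)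
  rw [hempty, Set.ncard_empty]

end WinningShifts

namespace ANS

theorem Addable.isRegularPred_hasBranching {A C B I : Type*} [Finite B] [Finite I] {S : ANS A}
    {x : ℕ → C} (hadd : S.Addable) (hx : SAutomatic S x) :
    S.IsRegularPred fun v : I ⊕ B → ℕ =>
      HasBranching (fun b j => x (v (Sum.inr b) + j)) fun j => {i | v (Sum.inl i) = j}.ncard := by
  have := (finite_range_of_sAutomatic hx).to_subtype
  have hchild (a : B) (c : Set.range x) : S.IsRegularPred fun v : (I ⊕ B) ⊕ Fin 1 → ℕ =>
      ∃ b, (∀ j < v (.inr 0), x (v (.inl (.inr b)) + j) = x (v (.inl (.inr a)) + j)) ∧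
        x (v (.inl (.inr b)) + v (.inr 0)) = c :=
    .exists_finite fun b => (hadd.isRegularPred_factor_eq hx _ _ _).and
      (hadd.isRegularPred_letter_add_eq hx _ _ _)
  refine .forall_nat hadd.isRegularLang_paddedNumerals (.forall_finite fun a => ?_)
  refine (IsRegularPred.rel_ncard (hchild a) (fun i => hadd.isRegularPred_eq (.inl (.inl i))
    (.inr 0)) fun p q => p = q + 1).congr fun v => ?_
  rw [← Set.ncard_image_of_injective _ Subtype.val_injective]
  refine Eq.congr_left (congrArg Set.ncard (Set.ext fun c => ⟨?_, ?_⟩))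
  · rintro ⟨c, hc, rfl⟩
    exact hc
  · rintro ⟨b, hb, rfl⟩
    exact ⟨⟨_, _, rfl⟩, ⟨b, hb, rfl⟩, rfl⟩

end ANS

theorem stmt1_general {A C : Type*} (S : ANS A) (hadd : S.Addable) (x : ℕ → C)
    (hx : SAutomatic S x) : WeaklySCodable S (winningShift (orbitClosure x)) := by
  intro k
  have hS := hadd.isRegularLang_paddedNumerals
  have hnu : S.IsRegularPred fun t : Fin k → ℕ =>
      t ∈ nuSet (winningShift (orbitClosure x)) k :=
    (hadd.isRegularPred_monotone.and
      (.exists_tuple hS (hadd.isRegularPred_hasBranching hx))).congr fun _ =>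
        mem_nuSet_winningShift_orbitClosure_iff.symm
  exact hnu.recognizable hS

/-- If `S` is an addable ANS and `x` is an `S`-automatic word over a finite
alphabet, then the winning shift of the subshift generated by `x` is weakly `S`-codable. -/
theorem stmt1 {A C : Type} [Fintype A] [Fintype C] (S : ANS A) (hadd : S.Addable)
    (x : ℕ → C) (hx : SAutomatic S x) :
    WeaklySCodable S (winningShift (orbitClosure x)) :=
  stmt1_general S hadd x hx
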